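/- If a ∈ {1,2}, b ∈ {0,1,2}\{a}, and v ∈ h(0ab), then the word p v is square-free and contains exactly one occurrence of p̂ and exactly one occurrence of p̄̂ as factors. -/

import Mathlib

/-- A word is *square-free* if it contains no factor of the form `u ++ u`
with `u` nonempty. -/
def SqFree {α : Type*} (w : List α) : Prop :=
  ∀ u : List α, u ≠ [] → ¬ (u ++ u) <:+: w

/-- The word `p̂ = 1202120121021201021`. -/
def phat : List (Fin 3) := [1,2,0,2,1,2,0,1,2,1,0,2,1,2,0,1,0,2,1]

/-- The palindrome `p = mirror(p̂) ++ 0 ++ p̂`. -/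
def pal : List (Fin 3) := phat.reverse ++ 0 :: phat

/-- The number of occurrences of a (nonempty) word `u` as a factor of `v`. -/
def occCount (u v : List (Fin 3)) : ℕ :=
  (List.range v.length).countP (fun i => (v.drop i).take u.length == u)

/-- A word `v` is *nice* if `p v p` is square-free and contains exactly two
occurrences of `p̂` and exactly two occurrences of its mirror image. -/
def IsNice (v : List (Fin 3)) : Prop :=
  SqFree (pal ++ v ++ pal) ∧ occCount phat (pal ++ v ++ pal) = 2 ∧
    occCount phat.reverse (pal ++ v ++ pal) = 2

/-- `lword n` is the lexicographically least nice word of length `n`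
(the empty word if no nice word of length `n` exists). -/
noncomputable def lword (n : ℕ) : List (Fin 3) := by
  classical
  exact if h : {w : List (Fin 3) | IsNice w ∧ w.length = n}.Nonempty then
    Set.IsWF.min
      (Set.Finite.isWF
        ((List.finite_length_eq (Fin 3) n).subset (fun _ hw => hw.2))) h
  else []

/-- A set of words is *mirror-free* if it does not contain both a word and its
(distinct) mirror image. -/
def MirrorFree (S : Set (List (Fin 3))) : Prop :=
  ∀ w ∈ S, w ≠ w.reverse → w.reverse ∉ S

/-- `S` is an `n`-good set: a mirror-free set of nice words of length `n` such that
for all `i ∈ {2n+100, …, 7n}` and all distinct `u v ∈ S`, the words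
`p u p v p lᵢ`, `p ū p v p lᵢ`, `p u p v̄ p l̄ᵢ` and `p ū p v̄ p l̄ᵢ` are square-free. -/
def GoodSet (n : ℕ) (S : Set (List (Fin 3))) : Prop :=
  (∀ w ∈ S, IsNice w ∧ w.length = n) ∧ MirrorFree S ∧
    ∀ i : ℕ, 2 * n + 100 ≤ i → i ≤ 7 * n → ∀ u ∈ S, ∀ v ∈ S, u ≠ v →
      SqFree (pal ++ u ++ pal ++ v ++ pal ++ lword i) ∧
      SqFree (pal ++ u.reverse ++ pal ++ v ++ pal ++ lword i) ∧
      SqFree (pal ++ u ++ pal ++ v.reverse ++ pal ++ (lword i).reverse) ∧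
      SqFree (pal ++ u.reverse ++ pal ++ v.reverse ++ pal ++ (lword i).reverse)

/-- `mirrorIf r w` is the mirror image of `w` if `r = true`, and `w` itself otherwise. -/
def mirrorIf (r : Bool) (w : List (Fin 3)) : List (Fin 3) :=
  if r then w.reverse else w

/-- The nondeterministic substitution `h`. -/
def himg : Fin 3 → Set (List (Fin 3)) :=
  ![{[0,1,2,1,0,2,1,2,0,2,1,0,2,0,1,0,2,1,2,0,1,2,1,0],
     [0,1,2,1,0,2,1,2,0,2,1,0,2,0,1,2,0,2,1,2,0,1,2,1,0]},
    {[1,2,0,2,1,0,2,0,1,0,2,1,0,1,2,1,0,2,0,1,2,0,2,1],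
     [1,2,0,2,1,0,2,0,1,0,2,1,0,1,2,0,1,0,2,0,1,2,0,2,1]},
    {[2,0,1,0,2,1,0,1,2,1,0,2,1,2,0,2,1,0,1,2,0,1,0,2],
     [2,0,1,0,2,1,0,1,2,1,0,2,1,2,0,1,2,1,0,1,2,0,1,0,2]}]

/-- `v` is an image of `w` under the substitution `h`: `v` is obtained by replacing
each letter `c` of `w` by some word of `himg c`. -/
def IsImage (w v : List (Fin 3)) : Prop :=
  ∃ vs : List (List (Fin 3)), List.Forall₂ (fun c u => u ∈ himg c) w vs ∧ v = vs.flatten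

/-- `runFree k l m c`: comparing `l` and `m` position by position there is no run of
`k + 1` consecutive agreements (`c + 1` for the run in progress). -/
def runFree (k : ℕ) : List ℕ → List ℕ → ℕ → Bool
  | [], _, _ => true
  | _ :: _, [], _ => true
  | a :: l, b :: m, c =>
    cond (Nat.beq a b) (Nat.rec false (fun c' _ => runFree k l m c') c) (runFree k l m k)

theorem runFree_same (k : ℕ) (y y' : List ℕ) : ∀ (u : List ℕ) (c : ℕ), c < u.length →
    runFree k (u ++ y) (u ++ y') c = false
  | [], c, h => by simp at h
  | a :: u, 0, _ => by simp [runFree]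
  | a :: u, c + 1, h => by
    simpa [runFree] using runFree_same k y y' u c (by simpa using h)

theorem runFree_prefix (k : ℕ) (u y y' : List ℕ) (hk : k < u.length) :
    ∀ (s s' : List ℕ) (c : ℕ), s.length = s'.length → c ≤ k →
    runFree k (s ++ (u ++ y)) (s' ++ (u ++ y')) c = false
  | [], [], c, _, hc => runFree_same k y y' u c (by omega)
  | [], _ :: _, c, h, _ => by simp at h
  | _ :: _, [], c, h, _ => by simp at h
  | a :: s, b :: s', c, h, hc => by
    have h' : s.length = s'.length := by simpa using h
    simp only [List.cons_append, runFree]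
    cases Nat.beq a b
    · exact runFree_prefix k u y y' hk s s' k h' le_rfl
    · cases c with
      | zero => rfl
      | succ c => exact runFree_prefix k u y y' hk s s' c h' (by omega)

/-- Checks all half-lengths up to `n`, the word being dropped step by step. -/
def sqCheck (w : List ℕ) : List ℕ → ℕ → Bool
  | [], _ => true
  | _ :: m, k => cond (runFree k w m k) (sqCheck w m (k + 1)) false

theorem sqCheck_spec (w : List ℕ) : ∀ (m : List ℕ) (k : ℕ), sqCheck w m k = true →
    ∀ j, j < m.length → runFree (k + j) w (m.drop (j + 1)) (k + j) = true
  | [], _, _, j, hj => by simp at hj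
  | a :: m, k, h, j, hj => by
    rw [sqCheck] at h
    cases hr : runFree k w m k with
    | false => rw [hr] at h; simp at h
    | true =>
      rw [hr] at h
      cases j with
      | zero => simpa using hr
      | succ j =>
        have := sqCheck_spec w m (k + 1) h j (by simpa using hj)
        have e : k + (j + 1) = k + 1 + j := by omega
        rw [e]; simpa using this

theorem sqFree_of_check (w : List (Fin 3))
    (h : sqCheck (w.map Fin.val) (w.map Fin.val) 0 = true) : SqFree w := by
  rintro u hu ⟨s, t, rfl⟩
  have hpos : 0 < u.length := List.length_pos_iff.mpr hu
  have h1 := sqCheck_spec _ _ _ h (u.length - 1) (by simp; omega)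
  have e : u.length - 1 + 1 = u.length := by omega
  rw [e, ← List.map_drop] at h1
  have hd : (s ++ (u ++ u) ++ t).drop u.length = (s ++ u).drop u.length ++ (u ++ t) := by
    rw [show s ++ (u ++ u) ++ t = (s ++ u) ++ (u ++ t) by simp,
      List.drop_append_of_le_length (by simp)]
  rw [hd] at h1
  have h2 := runFree_prefix (u.length - 1) (u.map Fin.val) ((u ++ t).map Fin.val)
    (t.map Fin.val) (by simp; omega) (s.map Fin.val)
    (((s ++ u).drop u.length).map Fin.val) (u.length - 1) (by simp) le_rfl
  simp only [List.map_append, List.append_assoc, zero_add] at h1 h2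
  rw [h1] at h2
  exact absurd h2 (by simp)

/-- List version of `himg`. -/
def hlist : Fin 3 → List (List (Fin 3)) :=
  ![[[0,1,2,1,0,2,1,2,0,2,1,0,2,0,1,0,2,1,2,0,1,2,1,0],
     [0,1,2,1,0,2,1,2,0,2,1,0,2,0,1,2,0,2,1,2,0,1,2,1,0]],
    [[1,2,0,2,1,0,2,0,1,0,2,1,0,1,2,1,0,2,0,1,2,0,2,1],
     [1,2,0,2,1,0,2,0,1,0,2,1,0,1,2,0,1,0,2,0,1,2,0,2,1]],
    [[2,0,1,0,2,1,0,1,2,1,0,2,1,2,0,2,1,0,1,2,0,1,0,2],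
     [2,0,1,0,2,1,0,1,2,1,0,2,1,2,0,1,2,1,0,1,2,0,1,0,2]]]

theorem mem_hlist (c : Fin 3) (u : List (Fin 3)) (h : u ∈ himg c) : u ∈ hlist c := by
  fin_cases c <;> simpa [himg, hlist] using h

/-- All three checks for one word. -/
def fullCheck (w : List (Fin 3)) : Bool :=
  sqCheck (w.map Fin.val) (w.map Fin.val) 0 &&
    (occCount phat w == 1 && occCount phat.reverse w == 1)

theorem all_check : ((([(1, 0), (1, 2), (2, 0), (2, 1)] : List (Fin 3 × Fin 3))).all fun ab =>
    (hlist 0).all fun x => (hlist ab.1).all fun y => (hlist ab.2).all fun z =>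
      fullCheck (pal ++ (x ++ (y ++ z)))) = true := by
  decide +kernel

/-- If `a ∈ {1,2}`, `b ≠ a` and `v ∈ h(0ab)`, then `p v` is square-free and
contains exactly one occurrence of `p̂` and one of its mirror image. -/
theorem pal_prefix_image (a b : Fin 3) (ha : a = 1 ∨ a = 2) (hb : b ≠ a)
    (v : List (Fin 3)) (hv : IsImage [0, a, b] v) :
    SqFree (pal ++ v) ∧ occCount phat (pal ++ v) = 1 ∧
      occCount phat.reverse (pal ++ v) = 1 := by
  obtain ⟨vs, hvs, rfl⟩ := hv
  obtain ⟨x, r, hx, hr, rfl⟩ := List.forall₂_cons_left_iff.mp hvs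
  obtain ⟨y, r2, hy, hr2, rfl⟩ := List.forall₂_cons_left_iff.mp hr
  obtain ⟨z, r3, hz, hr3, rfl⟩ := List.forall₂_cons_left_iff.mp hr2
  rw [List.forall₂_nil_left_iff] at hr3
  subst hr3
  have hab : (a, b) ∈ ([(1, 0), (1, 2), (2, 0), (2, 1)] : List (Fin 3 × Fin 3)) := by
    clear hvs hr hr2 hx hy hz
    revert a b; decide
  have h := all_check
  simp only [List.all_eq_true] at h
  have h1 := h (a, b) hab x (mem_hlist _ _ hx) y (mem_hlist _ _ hy) z (mem_hlist _ _ hz)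
  simp only [List.flatten_cons, List.flatten_nil, List.append_nil]
  simp only [fullCheck, Bool.and_eq_true, beq_iff_eq] at h1
  exact ⟨sqFree_of_check _ h1.1, h1.2.1, h1.2.2⟩
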